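/- Let N be a stepwise tree automaton with state set Q over the alphabet Σ, and let h be the forest-algebra homomorphism from the free forest algebra over Σ to the transition algebra of N determined by h(a_□) = {SIG(λ) | λ is a run of N on the atomic context a_□} for every a ∈ Σ. Then for every forest or context D over Σ, h(D) = {SIG(λ) | λ is a run of N on D}. -/

import Mathlib

/-! ### Forests, trees and contexts over an alphabet `σ`.

A forest is an ordered list of labeled unranked trees; a context is a
forest with a single hole at a leaf position. -/

mutual
/-- A `σ`-labeled rooted ordered unranked tree. -/
inductive FTree (σ : Type) : Type
  | node : σ → FForest σ → FTree σ

/-- A `σ`-labeled forest: an ordered (possibly empty) list of trees. -/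
inductive FForest (σ : Type) : Type
  | nil : FForest σ
  | cons : FTree σ → FForest σ → FForest σ
end

/-- Horizontal concatenation of forests (`⊕` on two forests). -/
def FForest.append {σ : Type} : FForest σ → FForest σ → FForest σ
  | .nil, G => G
  | .cons t F, G => .cons t (F.append G)

/-- A `σ`-labeled context: a forest with exactly one hole `□` at a leaf position.
`hole L R` is the context `L ⊕ □ ⊕ R`; `node L a C R` is the context
`L ⊕ a⟨C⟩ ⊕ R` where `a⟨C⟩` is the tree with `a`-labeled root whose
children form the context `C`. -/
inductive FCtx (σ : Type) : Type
  | hole : FForest σ → FForest σ → FCtx σ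
  | node : FForest σ → σ → FCtx σ → FForest σ → FCtx σ

/-- `F ⊕ C` for a forest `F` and a context `C` (the monoidal action ⊕_HV). -/
def FCtx.hvOp {σ : Type} (F : FForest σ) : FCtx σ → FCtx σ
  | .hole L R => .hole (F.append L) R
  | .node L a C R => .node (F.append L) a C R

/-- `C ⊕ F` for a context `C` and a forest `F` (the monoidal action ⊕_VH). -/
def FCtx.vhOp {σ : Type} : FCtx σ → FForest σ → FCtx σ
  | .hole L R, G => .hole L (R.append G)
  | .node L a C R, G => .node L a C (R.append G)

/-- `C ⊙ D` for contexts `C, D`: replace the hole of `C` by `D` (⊙_VV). -/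
def FCtx.vvOp {σ : Type} : FCtx σ → FCtx σ → FCtx σ
  | .hole L R, D => FCtx.hvOp L (FCtx.vhOp D R)
  | .node L a C R, D => .node L a (C.vvOp D) R

/-- `C ⊙ F` for a context `C` and a forest `F`: replace the hole of `C`
by the roots of `F` (⊙_VH). -/
def FCtx.plug {σ : Type} : FCtx σ → FForest σ → FForest σ
  | .hole L R, G => L.append (G.append R)
  | .node L a C R, G => L.append (.cons (.node a (C.plug G)) R)

/-- The empty forest ε. -/
def FForest.eps (σ : Type) : FForest σ := .nil

/-- The context □ consisting solely of the hole. -/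
def FCtx.box (σ : Type) : FCtx σ := .hole .nil .nil

/-- A stepwise nondeterministic tree automaton (NFTA)
`N = (Q, Σ, δ, Init, q0, qF)`.  A transition `(q1, q2, q3) ∈ δ` goes from
`q1` to `q3` when reading state `q2`. -/
structure NFTA (σ Q : Type) where
  delta : Set (Q × Q × Q)
  init : σ → Set Q
  q0 : Q
  qF : Q

mutual
/-- A run decoration of a tree: every node carries a transition
`(λ_pre, λ_self, λ_post)`. -/
inductive RTree (Q : Type) : Type
  | node : Q × Q × Q → RForest Q → RTree Q

/-- A run decoration of a forest. -/
inductive RForest (Q : Type) : Type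
  | nil : RForest Q
  | cons : RTree Q → RForest Q → RForest Q
end

/-- `λ_pre` of the root of a decorated tree. -/
def RTree.pre {Q : Type} : RTree Q → Q
  | .node (p, _, _) _ => p

/-- `λ_post` of the root of a decorated tree. -/
def RTree.post {Q : Type} : RTree Q → Q
  | .node (_, _, q) _ => q

/-- `λ_pre` of the first root of a decorated forest. -/
def RForest.firstPre {Q : Type} : RForest Q → Option Q
  | .nil => none
  | .cons t _ => some t.pre

/-- `λ_post` of the last root of a decorated forest. -/
def RForest.lastPost {Q : Type} : RForest Q → Option Q
  | .nil => none
  | .cons t .nil => some t.post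
  | .cons _ (.cons t F) => RForest.lastPost (.cons t F)

mutual
/-- `ValidT N ρ t`: the decoration `ρ` is a run of the automaton `N` on the
tree `t`: every node carries a transition of `δ`; `λ_self(v) ∈ Init(lab(v))`
for leaves `v`; `λ_self(v) = λ_post(last child of v)` for inner nodes `v`;
`λ_pre(first child of v) ∈ Init(lab(v))`; and `λ_pre(w) = λ_post(w')`
whenever `w'` is the left sibling of `w`. -/
def ValidT {σ Q : Type} (N : NFTA σ Q) : RTree Q → FTree σ → Prop
  | .node (p, s, q) ρs, .node a ts =>
    (p, s, q) ∈ N.delta ∧ ValidF N ρs ts ∧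
    (match ρs.firstPre, ρs.lastPost with
     | none, none => s ∈ N.init a
     | some fp, some lp => fp ∈ N.init a ∧ lp = s
     | _, _ => False)

/-- `ValidF N ρ F`: the decoration `ρ` is a run of `N` on the forest `F`
(the `λ_pre` of the leftmost root is unconstrained). -/
def ValidF {σ Q : Type} (N : NFTA σ Q) : RForest Q → FForest σ → Prop
  | .nil, .nil => True
  | .cons ρ ρs, .cons t ts =>
    ValidT N ρ t ∧ ValidF N ρs ts ∧
    (match ρs.firstPre with
     | none => True
     | some fp => fp = ρ.post)
  | _, _ => False
end

/-- A run decoration of a context: the hole carries the pair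
`(λ_pre(□), λ_post(□))` (its `λ_self` is the fresh state `q_□`, and all
transitions `(q, q_□, q')` are allowed). -/
inductive RCtx (Q : Type) : Type
  | hole : RForest Q → Q × Q → RForest Q → RCtx Q
  | node : RForest Q → Q × Q × Q → RCtx Q → RForest Q → RCtx Q

/-- `λ_pre` of the leftmost root of a decorated context. -/
def RCtx.preC {Q : Type} : RCtx Q → Q
  | .hole L (p, _) _ => L.firstPre.getD p
  | .node L (p, _, _) _ _ => L.firstPre.getD p

/-- `λ_post` of the rightmost root of a decorated context. -/
def RCtx.postC {Q : Type} : RCtx Q → Q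
  | .hole _ (_, q) R => R.lastPost.getD q
  | .node _ (_, _, q) _ R => R.lastPost.getD q

/-- `λ_pre(□)`. -/
def RCtx.holePre {Q : Type} : RCtx Q → Q
  | .hole _ (p, _) _ => p
  | .node _ _ C _ => C.holePre

/-- `λ_post(□)`. -/
def RCtx.holePost {Q : Type} : RCtx Q → Q
  | .hole _ (_, q) _ => q
  | .node _ _ C _ => C.holePost

/-- `ValidC N ρ C`: the decoration `ρ` is a run of `N` (extended by the
fresh state `q_□` with `Init(□) = {q_□}` and all transitions `(q, q_□, q')`)
on the context `C`, the hole being treated as an ordinary leaf. -/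
def ValidC {σ Q : Type} (N : NFTA σ Q) : RCtx Q → FCtx σ → Prop
  | .hole ρL (p, q) ρR, .hole L R =>
    ValidF N ρL L ∧ ValidF N ρR R ∧
    (match ρL.lastPost with
     | none => True
     | some lp => lp = p) ∧
    (match ρR.firstPre with
     | none => True
     | some fp => fp = q)
  | .node ρL (p, s, q) ρC ρR, .node L a C R =>
    (p, s, q) ∈ N.delta ∧ ValidF N ρL L ∧ ValidC N ρC C ∧ ValidF N ρR R ∧
    (match ρL.lastPost with
     | none => True
     | some lp => lp = p) ∧
    (match ρR.firstPre with
     | none => True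
     | some fp => fp = q) ∧
    ρC.preC ∈ N.init a ∧ ρC.postC = s
  | _, _ => False

/-! ### The transition algebra of `N` and the homomorphism `h` -/

/-- The identity relation `id_Q` (the horizontal neutral element). -/
def idH (Q : Type) : Set (Q × Q) := {x | ∃ q, x = (q, q)}

/-- The identity relation `id_{Q×Q}` (the vertical neutral element). -/
def idV (Q : Type) : Set ((Q × Q) × (Q × Q)) := {x | ∃ p, x = (p, p)}

/-- `⊕_HH` of the transition algebra. -/
def opHH {Q : Type} (F1 F2 : Set (Q × Q)) : Set (Q × Q) :=
  {x | ∃ q1 q2 q3, (q1, q2) ∈ F1 ∧ (q2, q3) ∈ F2 ∧ x = (q1, q3)}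

/-- `⊕_HV` of the transition algebra. -/
def opHV {Q : Type} (F : Set (Q × Q)) (C : Set ((Q × Q) × (Q × Q))) :
    Set ((Q × Q) × (Q × Q)) :=
  {x | ∃ q1 q2 q3 q4 q5,
    (q1, q2) ∈ F ∧ ((q2, q3), (q4, q5)) ∈ C ∧ x = ((q1, q3), (q4, q5))}

/-- `⊕_VH` of the transition algebra. -/
def opVH {Q : Type} (C : Set ((Q × Q) × (Q × Q))) (F : Set (Q × Q)) :
    Set ((Q × Q) × (Q × Q)) :=
  {x | ∃ q1 q2 q3 q4 q5,
    ((q1, q2), (q3, q4)) ∈ C ∧ (q2, q5) ∈ F ∧ x = ((q1, q5), (q3, q4))}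

/-- `⊙_VV` of the transition algebra. -/
def opVV {Q : Type} (C1 C2 : Set ((Q × Q) × (Q × Q))) :
    Set ((Q × Q) × (Q × Q)) :=
  {x | ∃ q1 q2 q3 q4 q5 q6,
    ((q1, q2), (q3, q4)) ∈ C1 ∧ ((q3, q4), (q5, q6)) ∈ C2 ∧
    x = ((q1, q2), (q5, q6))}

/-- `⊙_VH` of the transition algebra. -/
def opVHd {Q : Type} (C : Set ((Q × Q) × (Q × Q))) (F : Set (Q × Q)) :
    Set (Q × Q) :=
  {x | ∃ q1 q2 q3 q4,
    ((q1, q2), (q3, q4)) ∈ C ∧ (q3, q4) ∈ F ∧ x = (q1, q2)}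

/-- The atomic context `a_□`. -/
def atomCtx {σ : Type} (a : σ) : FCtx σ := .node .nil a (.hole .nil .nil) .nil

/-- The value `h(a_□)` of the homomorphism on the atomic context `a_□`:
the set of signatures of the runs of `N` on `a_□`. -/
def hAtom {σ Q : Type} (N : NFTA σ Q) (a : σ) : Set ((Q × Q) × (Q × Q)) :=
  {x | ∃ ρ : RCtx Q, ValidC N ρ (atomCtx a) ∧
    x = ((ρ.preC, ρ.postC), (ρ.holePre, ρ.holePost))}

mutual
/-- The homomorphism `h` on trees, determined by its values on the atomic
contexts and the algebra operations. -/
def hT {σ Q : Type} (N : NFTA σ Q) : FTree σ → Set (Q × Q)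
  | .node a ts => opVHd (hAtom N a) (hF N ts)

/-- The homomorphism `h` on forests. -/
def hF {σ Q : Type} (N : NFTA σ Q) : FForest σ → Set (Q × Q)
  | .nil => idH Q
  | .cons t ts => opHH (hT N t) (hF N ts)
end

/-- The homomorphism `h` on contexts. -/
def hC {σ Q : Type} (N : NFTA σ Q) : FCtx σ → Set ((Q × Q) × (Q × Q))
  | .hole L R => opHV (hF N L) (opVH (idV Q) (hF N R))
  | .node L a C R => opHV (hF N L) (opVH (opVV (hAtom N a) (hC N C)) (hF N R))

/-! Let `S(D)` be the set of signatures of the runs on `D`. A run on a tree, forest or context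
splits into runs on its immediate parts, and the run conditions between neighbouring parts say
exactly that their signatures compose. So `S` satisfies the equations that define `h`, whence
`S = h` by structural induction. The conditions at a node labelled `a` enter through `S(a_□)`,
the set of all `((p, q), (i, s))` with `(p, s, q) ∈ δ` and `i ∈ Init(a)`. -/

section TransitionAlgebra

variable {Q : Type} {F G : Set (Q × Q)} {C D : Set ((Q × Q) × (Q × Q))} {x y : Q} {v w : Q × Q}

@[simp]
theorem mem_idH : (x, y) ∈ idH Q ↔ x = y := by
  simp [idH, eq_comm]

@[simp]
theorem mem_idV : (v, w) ∈ idV Q ↔ v = w :=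
  ⟨fun ⟨_, h⟩ => by cases h; rfl, fun h => ⟨v, by rw [h]⟩⟩

@[simp]
theorem mem_opHH : (x, y) ∈ opHH F G ↔ ∃ z, (x, z) ∈ F ∧ (z, y) ∈ G := by
  simp [opHH]

@[simp]
theorem mem_opHV : ((x, y), w) ∈ opHV F C ↔ ∃ z, (x, z) ∈ F ∧ ((z, y), w) ∈ C := by
  simp [opHV, Prod.ext_iff]

@[simp]
theorem mem_opVH : ((x, y), w) ∈ opVH C F ↔ ∃ z, ((x, z), w) ∈ C ∧ (z, y) ∈ F := by
  simp [opVH, Prod.ext_iff]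

@[simp]
theorem mem_opVV : (v, w) ∈ opVV C D ↔ ∃ u, (v, u) ∈ C ∧ (u, w) ∈ D := by
  simp [opVV, Prod.ext_iff]

@[simp]
theorem mem_opVHd : v ∈ opVHd C F ↔ ∃ w, (v, w) ∈ C ∧ w ∈ F := by
  simp [opVHd, Prod.ext_iff]

end TransitionAlgebra

namespace RForest

variable {Q : Type} {x y : Q}

/-- The signatures of a decorated forest: `(λ_pre(first root), λ_post(last root))`, or every pair
`(q, q)` if the forest is empty. -/
def signatures (ρ : RForest Q) : Set (Q × Q) :=
  {x | (∃ q1 q2, ρ.firstPre = some q1 ∧ ρ.lastPost = some q2 ∧ x = (q1, q2)) ∨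
    (ρ = .nil ∧ x.1 = x.2)}

theorem lastPost_cons : ∀ (τ : RTree Q) (ρ : RForest Q),
    (cons τ ρ).lastPost = some (ρ.lastPost.getD τ.post)
  | _, .nil => rfl
  | _, .cons τ' ρ => by simp only [lastPost, lastPost_cons τ' ρ, Option.getD_some]

@[simp]
theorem mem_signatures_nil : (x, y) ∈ (nil : RForest Q).signatures ↔ x = y := by
  simp [signatures, firstPre]

@[simp]
theorem mem_signatures_cons {τ : RTree Q} {ρ : RForest Q} :
    (x, y) ∈ (cons τ ρ).signatures ↔ τ.pre = x ∧ ρ.lastPost.getD τ.post = y := by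
  simp [signatures, firstPre, lastPost_cons, eq_comm]

theorem mem_signatures_iff_lastPost {ρ : RForest Q} :
    (x, y) ∈ ρ.signatures ↔ (∀ q ∈ ρ.lastPost, q = y) ∧ ρ.firstPre.getD y = x := by
  cases ρ <;> simp [firstPre, lastPost, lastPost_cons, eq_comm, and_comm]

theorem mem_signatures_iff_firstPre {ρ : RForest Q} :
    (x, y) ∈ ρ.signatures ↔ (∀ q ∈ ρ.firstPre, q = x) ∧ ρ.lastPost.getD x = y := by
  cases ρ <;> simp [firstPre, lastPost, lastPost_cons]

end RForest

section Runs

variable {σ Q : Type} {N : NFTA σ Q}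

theorem validT_node_iff {τ : RTree Q} {a : σ} {F : FForest σ} :
    ValidT N τ (.node a F) ↔ ∃ p s q ρ, τ = .node (p, s, q) ρ ∧ (p, s, q) ∈ N.delta ∧
      ValidF N ρ F ∧ ∃ i ∈ N.init a, (i, s) ∈ ρ.signatures := by
  obtain ⟨⟨p, s, q⟩, _ | ⟨τ, ρ⟩⟩ := τ <;>
    simp [ValidT, RForest.firstPre, RForest.lastPost, RForest.lastPost_cons]

theorem validF_nil_iff {ρ : RForest Q} : ValidF N ρ .nil ↔ ρ = .nil := by
  cases ρ <;> simp [ValidF]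

theorem validF_cons_iff {ρ : RForest Q} {t : FTree σ} {F : FForest σ} :
    ValidF N ρ (.cons t F) ↔ ∃ τ ρ', ρ = .cons τ ρ' ∧ ValidT N τ t ∧ ValidF N ρ' F ∧
      ∀ q ∈ ρ'.firstPre, q = τ.post := by
  obtain _ | ⟨τ, _ | ⟨τ', ρ'⟩⟩ := ρ <;> simp [ValidF, RForest.firstPre]

theorem validC_hole_iff {ρ : RCtx Q} {L R : FForest σ} :
    ValidC N ρ (.hole L R) ↔ ∃ ρL p q ρR, ρ = .hole ρL (p, q) ρR ∧ ValidF N ρL L ∧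
      ValidF N ρR R ∧ (∀ r ∈ ρL.lastPost, r = p) ∧ ∀ r ∈ ρR.firstPre, r = q := by
  obtain ⟨ρL, ⟨p, q⟩, ρR⟩ | _ := ρ
  · cases hL : ρL.lastPost <;> cases hR : ρR.firstPre <;> simp [ValidC, hL, hR]
  · simp [ValidC]

theorem validC_node_iff {ρ : RCtx Q} {L R : FForest σ} {a : σ} {C : FCtx σ} :
    ValidC N ρ (.node L a C R) ↔ ∃ ρL p s q ρC ρR, ρ = .node ρL (p, s, q) ρC ρR ∧
      (p, s, q) ∈ N.delta ∧ ValidF N ρL L ∧ ValidC N ρC C ∧ ValidF N ρR R ∧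
      (∀ r ∈ ρL.lastPost, r = p) ∧ (∀ r ∈ ρR.firstPre, r = q) ∧
      ρC.preC ∈ N.init a ∧ ρC.postC = s := by
  obtain _ | ⟨ρL, ⟨p, s, q⟩, ρC, ρR⟩ := ρ
  · simp [ValidC]
  · obtain rfl | hs := eq_or_ne s ρC.postC
    · cases hL : ρL.lastPost <;> cases hR : ρR.firstPre <;> simp [ValidC, hL, hR]
    · simp [ValidC, hs, hs.symm]

theorem mem_hAtom {a : σ} {p q i s : Q} :
    ((p, q), (i, s)) ∈ hAtom N a ↔ (p, s, q) ∈ N.delta ∧ i ∈ N.init a := by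
  simp [hAtom, atomCtx, validC_node_iff, validC_hole_iff, validF_nil_iff, RCtx.preC, RCtx.postC,
    RCtx.holePre, RCtx.holePost, RForest.firstPre, RForest.lastPost]

end Runs

section Signatures

variable {σ Q : Type} (N : NFTA σ Q)

/-- The signatures `(λ_pre(root), λ_post(root))` of the runs `λ` of `N` on a tree. -/
def treeSignatures (t : FTree σ) : Set (Q × Q) :=
  {x | ∃ τ : RTree Q, ValidT N τ t ∧ x = (τ.pre, τ.post)}

/-- The signatures of the runs of `N` on a forest. -/
def forestSignatures (F : FForest σ) : Set (Q × Q) :=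
  {x | ∃ ρ : RForest Q, ValidF N ρ F ∧ x ∈ ρ.signatures}

/-- The signatures of the runs of `N` on a context. -/
def ctxSignatures (C : FCtx σ) : Set ((Q × Q) × (Q × Q)) :=
  {x | ∃ ρ : RCtx Q, ValidC N ρ C ∧ x = ((ρ.preC, ρ.postC), (ρ.holePre, ρ.holePost))}

theorem treeSignatures_node (a : σ) (F : FForest σ) :
    treeSignatures N (.node a F) = opVHd (hAtom N a) (forestSignatures N F) := by
  ext ⟨x, y⟩
  constructor
  · rintro ⟨τ, hτ, hxy⟩
    obtain ⟨p, s, q, ρ, rfl, hδ, hρ, i, hi, his⟩ := validT_node_iff.1 hτ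
    cases hxy
    exact mem_opVHd.2 ⟨(i, s), mem_hAtom.2 ⟨hδ, hi⟩, ρ, hρ, his⟩
  · intro hxy
    obtain ⟨⟨i, s⟩, ha, ρ, hρ, his⟩ := mem_opVHd.1 hxy
    obtain ⟨hδ, hi⟩ := mem_hAtom.1 ha
    exact ⟨.node (x, s, y) ρ, validT_node_iff.2 ⟨x, s, y, ρ, rfl, hδ, hρ, i, hi, his⟩, rfl⟩

theorem forestSignatures_nil : forestSignatures N .nil = idH Q := by
  ext ⟨x, y⟩
  simp [forestSignatures, validF_nil_iff]

theorem forestSignatures_cons (t : FTree σ) (F : FForest σ) :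
    forestSignatures N (.cons t F) = opHH (treeSignatures N t) (forestSignatures N F) := by
  ext ⟨x, y⟩
  constructor
  · rintro ⟨ρ, hρ, hxy⟩
    obtain ⟨τ, ρ', rfl, hτ, hρ', hlink⟩ := validF_cons_iff.1 hρ
    obtain ⟨rfl, hy⟩ := RForest.mem_signatures_cons.1 hxy
    exact mem_opHH.2 ⟨τ.post, ⟨τ, hτ, rfl⟩, ρ', hρ',
      RForest.mem_signatures_iff_firstPre.2 ⟨hlink, hy⟩⟩
  · intro hxy
    obtain ⟨_, ⟨τ, hτ, hpair⟩, ρ', hρ', hsig⟩ := mem_opHH.1 hxy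
    cases hpair
    obtain ⟨hlink, hy⟩ := RForest.mem_signatures_iff_firstPre.1 hsig
    exact ⟨.cons τ ρ', validF_cons_iff.2 ⟨τ, ρ', rfl, hτ, hρ', hlink⟩,
      RForest.mem_signatures_cons.2 ⟨rfl, hy⟩⟩

theorem ctxSignatures_hole (L R : FForest σ) :
    ctxSignatures N (.hole L R) =
      opHV (forestSignatures N L) (opVH (idV Q) (forestSignatures N R)) := by
  ext ⟨⟨x, y⟩, ⟨u, v⟩⟩
  simp only [mem_opHV, mem_opVH, mem_idV]
  constructor
  · rintro ⟨ρ, hρ, hxy⟩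
    obtain ⟨ρL, p, q, ρR, rfl, hL, hR, hlinkL, hlinkR⟩ := validC_hole_iff.1 hρ
    cases hxy
    exact ⟨p, ⟨ρL, hL, RForest.mem_signatures_iff_lastPost.2 ⟨hlinkL, rfl⟩⟩, q, rfl,
      ρR, hR, RForest.mem_signatures_iff_firstPre.2 ⟨hlinkR, rfl⟩⟩
  · rintro ⟨p, ⟨ρL, hL, hsigL⟩, q, hpq, ρR, hR, hsigR⟩
    obtain ⟨hlinkL, rfl⟩ := RForest.mem_signatures_iff_lastPost.1 hsigL
    obtain ⟨hlinkR, rfl⟩ := RForest.mem_signatures_iff_firstPre.1 hsigR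
    cases hpq
    exact ⟨.hole ρL (u, v) ρR,
      validC_hole_iff.2 ⟨ρL, u, v, ρR, rfl, hL, hR, hlinkL, hlinkR⟩, rfl⟩

theorem ctxSignatures_node (L : FForest σ) (a : σ) (C : FCtx σ) (R : FForest σ) :
    ctxSignatures N (.node L a C R) =
      opHV (forestSignatures N L)
        (opVH (opVV (hAtom N a) (ctxSignatures N C)) (forestSignatures N R)) := by
  ext ⟨⟨x, y⟩, ⟨u, v⟩⟩
  simp only [mem_opHV, mem_opVH, mem_opVV]
  constructor
  · rintro ⟨ρ, hρ, hxy⟩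
    obtain ⟨ρL, p, s, q, ρC, ρR, rfl, hδ, hL, hC, hR, hlinkL, hlinkR, hi, rfl⟩ :=
      validC_node_iff.1 hρ
    cases hxy
    exact ⟨p, ⟨ρL, hL, RForest.mem_signatures_iff_lastPost.2 ⟨hlinkL, rfl⟩⟩,
      q, ⟨_, mem_hAtom.2 ⟨hδ, hi⟩, ρC, hC, rfl⟩,
      ρR, hR, RForest.mem_signatures_iff_firstPre.2 ⟨hlinkR, rfl⟩⟩
  · rintro ⟨p, ⟨ρL, hL, hsigL⟩, q, ⟨_, ha, ρC, hC, hsigC⟩, ρR, hR, hsigR⟩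
    obtain ⟨hlinkL, rfl⟩ := RForest.mem_signatures_iff_lastPost.1 hsigL
    obtain ⟨hlinkR, rfl⟩ := RForest.mem_signatures_iff_firstPre.1 hsigR
    cases hsigC
    obtain ⟨hδ, hi⟩ := mem_hAtom.1 ha
    exact ⟨.node ρL (p, ρC.postC, q) ρC ρR, validC_node_iff.2
      ⟨ρL, p, ρC.postC, q, ρC, ρR, rfl, hδ, hL, hC, hR, hlinkL, hlinkR, hi, rfl⟩, rfl⟩

mutual

theorem hT_eq_treeSignatures : ∀ t : FTree σ, hT N t = treeSignatures N t
  | .node a F => by rw [hT, hF_eq_forestSignatures F, treeSignatures_node]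

theorem hF_eq_forestSignatures : ∀ F : FForest σ, hF N F = forestSignatures N F
  | .nil => by rw [hF, forestSignatures_nil]
  | .cons t F => by
    rw [hF, hT_eq_treeSignatures t, hF_eq_forestSignatures F, forestSignatures_cons]

end

theorem hC_eq_ctxSignatures : ∀ C : FCtx σ, hC N C = ctxSignatures N C
  | .hole L R => by
    rw [hC, hF_eq_forestSignatures, hF_eq_forestSignatures, ctxSignatures_hole]
  | .node L a C R => by
    rw [hC, hF_eq_forestSignatures, hF_eq_forestSignatures, hC_eq_ctxSignatures C,
      ctxSignatures_node]

end Signatures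

theorem homomorphism_computes_run_signatures_general {σ Q : Type} (N : NFTA σ Q) :
    (∀ F : FForest σ, hF N F =
      {x | ∃ ρ : RForest Q, ValidF N ρ F ∧
        ((∃ q1 q2, ρ.firstPre = some q1 ∧ ρ.lastPost = some q2 ∧ x = (q1, q2)) ∨
         (ρ = .nil ∧ x.1 = x.2))}) ∧
    (∀ C : FCtx σ, hC N C =
      {x | ∃ ρ : RCtx Q, ValidC N ρ C ∧
        x = ((ρ.preC, ρ.postC), (ρ.holePre, ρ.holePost))}) :=
  ⟨hF_eq_forestSignatures N, hC_eq_ctxSignatures N⟩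

/-- Let `N` be a stepwise tree automaton with state set `Q`
over the alphabet `σ`, and let `h` be the forest-algebra homomorphism from
the free forest algebra over `σ` to the transition algebra of `N` determined
by `h(a_□) = {SIG(λ) | λ is a run of N on a_□}`.  Then for every forest or
context `D` over `σ`, `h(D) = {SIG(λ) | λ is a run of N on D}`.  (For a
nonempty forest the signature of a run is the pair
`(λ_pre(first root), λ_post(last root))`; the empty forest carries the
identity signatures.) -/
theorem homomorphism_computes_run_signatures {σ Q : Type} [Fintype Q]
    (N : NFTA σ Q) :
    (∀ F : FForest σ, hF N F =
      {x | ∃ ρ : RForest Q, ValidF N ρ F ∧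
        ((∃ q1 q2, ρ.firstPre = some q1 ∧ ρ.lastPost = some q2 ∧ x = (q1, q2)) ∨
         (ρ = .nil ∧ x.1 = x.2))}) ∧
    (∀ C : FCtx σ, hC N C =
      {x | ∃ ρ : RCtx Q, ValidC N ρ C ∧
        x = ((ρ.preC, ρ.postC), (ρ.holePre, ρ.holePost))}) :=
  homomorphism_computes_run_signatures_general N
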